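/- Let R be a commutative ring, let X be a digraph with vertex type V, edge type E and source and target maps s, t : E → V, let v ∈ V, and let M be an R-module. Then the R-linear map Ω_R(v) ⊗[R] M → {μ ∈ (E →₀ M) : μ(e) = 0 unless s e = v or t e = v, and ∑_{e : s e = v} μ(e) = ∑_{e : t e = v} μ(e)} determined on pure tensors by λ ⊗ m ↦ (e ↦ λ(e) • m) is an R-linear bijection. -/

import Mathlib

/-!
Write `δ = degMap s - degMap t`, so that `Ω_M(v)` is the kernel of `δ` on the functions supported
on the edges incident to `v`. The value of `δ` on the generator at an edge `e` is
`c e = [s e = v] - [t e = v] ∈ {-1, 0, 1}`. Hence there is a finitely supported `a : E →₀ R` on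
incident edges with `c e = c e * δ a` for every `e`: take `a = c e₀` at one edge `e₀` with
`c e₀ ≠ 0`, or `a = 0` if there is none (`exists_corrector`).

For incident `e` the vectors `w e = single e 1 - c e • a` then lie in `Ω_R(v)`, and, for every `M`
at once, each `μ ∈ Ω_M(v)` satisfies `∑ w e • μ e = μ - a • δ μ = μ`
(`exists_reproducing_family`). So `μ ↦ ∑ w e ⊗ μ e` is an inverse of the canonical map: the
identity for `M` gives surjectivity onto `Ω_M(v)`, and the identity for `R` itself gives
injectivity. No flatness of `M` is needed.
-/


open scoped Classical in
/-- The `R`-linear map `(E →₀ M) →ₗ[R] M` summing the values of a finitely supported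
function over the edges `e` with `s e = v` (`s` being either the source or the target
map of a digraph); on a generator `single e x` it gives `x` if `s e = v` and `0`
otherwise. -/
noncomputable def degMap (R : Type) [Semiring R] {V E : Type} (M : Type)
    [AddCommMonoid M] [Module R M] (s : E → V) (v : V) : (E →₀ M) →ₗ[R] M :=
  Finsupp.lsum ℕ fun e => if s e = v then (LinearMap.id : M →ₗ[R] M) else 0

/-- The `M`-valued orientation semimodule of the digraph `(V, E, s, t)` at a vertex
`v`: finitely supported functions `E →₀ M` vanishing on edges not incident to `v`
and whose total value on edges with source `v` agrees with the total value on edges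
with target `v`. -/
noncomputable def OmegaMod (R : Type) [Semiring R] {V E : Type} (M : Type)
    [AddCommMonoid M] [Module R M] (s t : E → V) (v : V) : Submodule R (E →₀ M) :=
  Finsupp.supported M R {e | s e = v ∨ t e = v} ⊓
    LinearMap.eqLocus (degMap R M s v) (degMap R M t v)

/-- The orientation semimodule `Ω_S(v)` of the digraph `(V, E, s, t)` over the
semiring `S` at the vertex `v`. -/
noncomputable def Omega (S : Type) [Semiring S] {V E : Type} (s t : E → V) (v : V) :
    Submodule S (E →₀ S) :=
  OmegaMod S S s t v

open TensorProduct

/-- The bilinear map `M →ₗ (E →₀ R) →ₗ (E →₀ M)` sending `(m, l)` to the finitely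
supported function `e ↦ l e • m`. -/
noncomputable def smulFamily (R : Type) [CommSemiring R] {E : Type} (M : Type)
    [AddCommMonoid M] [Module R M] : M →ₗ[R] (E →₀ R) →ₗ[R] (E →₀ M) where
  toFun m := Finsupp.mapRange.linearMap (LinearMap.toSpanSingleton R M m)
  map_add' m m' := by
    ext l e
    simp [smul_add]
  map_smul' c m := by
    ext l e
    simp [smul_comm c]

/-- The canonical `R`-linear map `Ω_R(v) ⊗[R] M → (E →₀ M)` determined on pure
tensors by `λ ⊗ m ↦ (e ↦ λ e • m)`. -/
noncomputable def orientationTensorMap (R : Type) [CommSemiring R] {V E : Type}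
    (M : Type) [AddCommMonoid M] [Module R M] (s t : E → V) (v : V) :
    (↥(Omega R s t v) ⊗[R] M) →ₗ[R] (E →₀ M) :=
  TensorProduct.lift ((smulFamily R M).flip.comp (Omega R s t v).subtype)

lemma degMap_single (R : Type) [Semiring R] {V E : Type} (M : Type)
    [AddCommMonoid M] [Module R M] (s : E → V) (v : V) (e : E) (m : M) [Decidable (s e = v)] :
    degMap R M s v (Finsupp.single e m) = if s e = v then m else 0 := by
  classical
  rw [degMap, Finsupp.lsum_single]
  split_ifs <;> rfl

lemma smulFamily_apply (R : Type) [CommSemiring R] {E : Type} (M : Type)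
    [AddCommMonoid M] [Module R M] (m : M) (l : E →₀ R) (e : E) :
    smulFamily R M m l e = l e • m := by
  simp [smulFamily]

lemma smulFamily_single (R : Type) [CommSemiring R] {E : Type} (M : Type)
    [AddCommMonoid M] [Module R M] (m : M) (e : E) (r : R) :
    smulFamily R M m (Finsupp.single e r) = Finsupp.single e (r • m) := by
  simp [smulFamily]

lemma degMap_smulFamily (R : Type) [CommSemiring R] {V E : Type} (M : Type)
    [AddCommMonoid M] [Module R M] (s : E → V) (v : V) (m : M) (l : E →₀ R) :
    degMap R M s v (smulFamily R M m l) = degMap R R s v l • m := by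
  classical
  induction l using Finsupp.induction_linear with
  | zero => simp
  | add f g hf hg => simp only [map_add, hf, hg, add_smul]
  | single e r =>
    rw [smulFamily_single, degMap_single, degMap_single]
    split_ifs <;> simp

lemma smulFamily_mem (R : Type) [CommSemiring R] {V E : Type} (M : Type)
    [AddCommMonoid M] [Module R M] (s t : E → V) (v : V) (m : M) {l : E →₀ R}
    (hl : l ∈ Omega R s t v) : smulFamily R M m l ∈ OmegaMod R M s t v := by
  obtain ⟨h₁, h₂⟩ := hl
  refine ⟨?_, ?_⟩
  · refine (Finsupp.mem_supported' R _).2 fun e he => ?_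
    rw [smulFamily_apply, (Finsupp.mem_supported' R _).1 h₁ e he, zero_smul]
  · have h : degMap R R s v l = degMap R R t v l := h₂
    change degMap R M s v _ = degMap R M t v _
    rw [degMap_smulFamily, degMap_smulFamily, h]

/-- The vector `a` corrects the imbalance of every generator: subtracting from `single e 1` the
multiple of `a` by its imbalance leaves a balanced function. -/
lemma exists_corrector (R : Type) [CommRing R] {V E : Type} (s t : E → V) (v : V) :
    ∃ a : E →₀ R, a ∈ Finsupp.supported R R {e | s e = v ∨ t e = v} ∧
      ∀ e, (degMap R R s v - degMap R R t v) (Finsupp.single e 1) =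
        (degMap R R s v - degMap R R t v) (Finsupp.single e 1) *
          (degMap R R s v - degMap R R t v) a := by
  classical
  by_cases h : ∃ e, ¬(s e = v ↔ t e = v)
  · obtain ⟨e₀, h₀⟩ := h
    refine ⟨Finsupp.single e₀
      ((degMap R R s v - degMap R R t v) (Finsupp.single e₀ 1)), ?_, fun e => ?_⟩
    · refine Finsupp.single_mem_supported R _ ?_
      change s e₀ = v ∨ t e₀ = v
      tauto
    · -- the imbalance at `e₀` is `1` or `-1`, so its square is `1`
      by_cases hs : s e₀ = v <;> by_cases ht : t e₀ = v <;>
        simp_all [degMap_single]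
  · push Not at h
    refine ⟨0, Submodule.zero_mem _, fun e => ?_⟩
    simp [degMap_single, h e]

/-- One family in `Ω_R(v)`, indexed by the edges, reproduces the elements of `Ω_M(v)` for all
modules `M` simultaneously, using the values of the function as coefficients. -/
lemma exists_reproducing_family (R : Type) [CommRing R] {V E : Type} (s t : E → V) (v : V) :
    ∃ w : E → Omega R s t v, ∀ (M : Type) [AddCommGroup M] [Module R M],
      ∀ μ ∈ OmegaMod R M s t v,
        (μ.sum fun e m => smulFamily R M m (w e : E →₀ R)) = μ := by
  classical
  obtain ⟨a, ha, hδ⟩ := exists_corrector R s t v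
  set δ := degMap R R s v - degMap R R t v with hδdef
  have hmem : ∀ e, (s e = v ∨ t e = v) →
      Finsupp.single e 1 - δ (Finsupp.single e 1) • a ∈ Omega R s t v := by
    intro e he
    refine ⟨Submodule.sub_mem _ (Finsupp.single_mem_supported R _ he)
      (Submodule.smul_mem _ _ ha), ?_⟩
    change degMap R R s v _ = degMap R R t v _
    rw [← sub_eq_zero, ← LinearMap.sub_apply, ← hδdef, map_sub, map_smul, smul_eq_mul, ← hδ e,
      sub_self]
  refine ⟨fun e => if he : s e = v ∨ t e = v then ⟨_, hmem e he⟩ else 0, ?_⟩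
  intro M _ _ μ hμ
  -- `L` is the identity on balanced functions and sends `single e m` to `w e • m`
  let L : (E →₀ M) →ₗ[R] (E →₀ M) :=
    LinearMap.id - ((smulFamily R M).flip a).comp (degMap R M s v - degMap R M t v)
  have hL : L μ = μ := by
    have h : degMap R M s v μ = degMap R M t v μ := hμ.2
    simp [L, h]
  conv_rhs => rw [← hL, ← μ.sum_single, map_finsuppSum]
  refine Finsupp.sum_congr fun e he => ?_
  have hinc : s e = v ∨ t e = v := hμ.1 he
  have hd : δ (Finsupp.single e 1) • μ e =
      (degMap R M s v - degMap R M t v) (Finsupp.single e (μ e)) := by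
    simp only [hδdef, LinearMap.sub_apply, sub_smul, ← degMap_smulFamily, smulFamily_single,
      one_smul]
  simp only [dif_pos hinc, L, LinearMap.sub_apply, LinearMap.id_apply, LinearMap.comp_apply,
    LinearMap.flip_apply, map_sub, map_smul, smulFamily_single, one_smul]
  rw [← LinearMap.sub_apply (smulFamily R M _), ← map_sub, ← LinearMap.sub_apply (degMap R M s v),
    ← hd, map_smul, LinearMap.smul_apply]

/-- over a commutative ring `R` and for any `R`-module `M`, the
`R`-linear map `Ω_R(v) ⊗[R] M → Ω_M(v)` determined on pure tensors by
`λ ⊗ m ↦ (e ↦ λ e • m)` is a bijection onto the `M`-valued orientation module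
of balanced finitely supported `M`-valued functions at `v`. -/
theorem orientation_tensor_equiv (R : Type) [CommRing R] (V E : Type)
    (s t : E → V) (v : V) (M : Type) [AddCommGroup M] [Module R M] :
    (∀ (l : ↥(Omega R s t v)) (m : M) (e : E),
        orientationTensorMap R M s t v (l ⊗ₜ[R] m) e = (l : E →₀ R) e • m) ∧
    Function.Injective ⇑(orientationTensorMap R M s t v) ∧
    Set.range ⇑(orientationTensorMap R M s t v) = ↑(OmegaMod R M s t v) := by
  have hpure : ∀ (l : ↥(Omega R s t v)) (m : M),
      orientationTensorMap R M s t v (l ⊗ₜ[R] m) = smulFamily R M m (l : E →₀ R) :=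
    fun _ _ => rfl
  obtain ⟨w, hw⟩ := exists_reproducing_family R s t v
  let Ψ : (E →₀ M) →ₗ[R] (↥(Omega R s t v) ⊗[R] M) :=
    Finsupp.lsum ℕ fun e => TensorProduct.mk R (Omega R s t v) M (w e)
  refine ⟨fun l m e => by rw [hpure, smulFamily_apply], ?_, Set.Subset.antisymm ?_ ?_⟩
  · have hΨ : Ψ.comp (orientationTensorMap R M s t v) = LinearMap.id := by
      refine TensorProduct.ext' fun l m => ?_
      -- the reproducing identity over `R`, inside `Ω_R(v)`
      have hl : (l : E →₀ R).sum (fun e r => r • w e) = l := by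
        apply Subtype.ext
        conv_rhs => rw [← hw R l l.2]
        simp only [Finsupp.sum, Submodule.coe_sum, Submodule.coe_smul]
        refine Finset.sum_congr rfl fun e _ => ?_
        ext e'
        rw [smulFamily_apply, Finsupp.smul_apply, smul_eq_mul, smul_eq_mul, mul_comm]
      rw [LinearMap.comp_apply, hpure, LinearMap.id_apply]
      conv_rhs => rw [← hl]
      change Ψ (Finsupp.mapRange (LinearMap.toSpanSingleton R M m) (map_zero _) (l : E →₀ R)) = _
      simp only [Ψ, Finsupp.lsum_apply]
      rw [Finsupp.sum_mapRange_index (by simp)]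
      simp [Finsupp.sum, TensorProduct.sum_tmul, TensorProduct.smul_tmul]
    exact Function.LeftInverse.injective (g := Ψ) fun x => LinearMap.congr_fun hΨ x
  · rintro _ ⟨x, rfl⟩
    induction x using TensorProduct.induction_on with
    | zero => rw [map_zero]; exact Submodule.zero_mem _
    | tmul l m => rw [hpure]; exact smulFamily_mem R M s t v m l.2
    | add x y hx hy => rw [map_add]; exact Submodule.add_mem _ hx hy
  · intro μ hμ
    refine ⟨Ψ μ, ?_⟩
    conv_rhs => rw [← hw M μ hμ]
    simp only [Ψ, Finsupp.lsum_apply, map_finsuppSum]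
    rfl
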